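/- Let F be a finite field with q elements, b ≤ N natural numbers, and let τ be a b-element subset of {0, 1, ..., N−1}. Then the number of b × N matrices M over F whose pivot set equals τ is |GL_b(F)| · q^{b(N−b) − ℓ(τ)}, where ℓ(τ) = #{(i,j) : i < j, j ∈ τ, i ∉ τ} (note ℓ(τ) ≤ b(N−b), so the exponent is a natural number). In particular the fraction of all b × N matrices with pivot set τ is (|GL_b(F)|/q^{b²}) · q^{−ℓ(τ)}, independent of N. -/

import Mathlib

open Matrix

/-- The pivot set of a `b × N` matrix: column `j` is pivotal if it does not lie in the
linear span of the columns with index strictly less than `j`. -/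
def pivotSetFin {F : Type*} [Field F] {b N : ℕ} (M : Matrix (Fin b) (Fin N) F) : Set (Fin N) :=
  {j | Mᵀ j ∉ Submodule.span F (Mᵀ '' Set.Iio j)}

/-- The inversion number of a juggling state `τ ⊆ {0,...,N-1}`:
the number of pairs `(i,j)` with `i < j`, `j ∈ τ`, `i ∉ τ`. -/
def invNumFin {N : ℕ} (τ : Finset (Fin N)) : ℕ :=
  ((Finset.univ : Finset (Fin N × Fin N)).filter
    fun p => p.1 < p.2 ∧ p.2 ∈ τ ∧ p.1 ∉ τ).card

/-!
A family `v : ι → V` over a finite linear order has pivot set `s` exactly when its members indexed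
by `s` are linearly independent and each other `v i` lies in the span of the `v j` with `j ∈ s` and
`j < i`, a space of dimension `#{j ∈ s | j < i}`. Over a field with `q` elements every choice of the
independent members therefore extends in `q ^ ∑ i ∉ s, #{j ∈ s | j < i}` ways, and the pairs counted
by this exponent are the non-inversions among all `#s * #sᶜ` pairs in `sᶜ × s`.
-/

section PivotSet

open Finset

variable {K V ι : Type*} [DivisionRing K] [AddCommGroup V] [Module K V]

variable (K) in
/-- The pivot set of a family of vectors indexed by an ordered type: `j` is a pivot if `v j` is not
in the span of the earlier vectors. For the columns of a matrix this is `pivotSetFin`. -/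
def pivotSet [Preorder ι] (v : ι → V) : Set ι :=
  {j | v j ∉ Submodule.span K (v '' Set.Iio j)}

variable [LinearOrder ι]

theorem linearIndepOn_pivotSet (v : ι → V) : LinearIndepOn K v (pivotSet K v) := by
  refine linearIndepOn_of_finite _ fun t ht ht_fin ↦ ?_
  lift t to Finset ι using ht_fin
  induction t using Finset.induction_on_max with
  | empty => simp
  | insert a t hlt ih =>
    rw [coe_insert, Set.insert_subset_iff] at ht
    rw [coe_insert]
    exact (ih ht.2).insert fun hmem ↦ ht.1 (Submodule.span_mono (Set.image_mono hlt) hmem)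

theorem span_image_Iio_eq_span_image_inter {v : ι → V} {s : Set ι} {i : ι}
    (h : ∀ j < i, j ∉ s → v j ∈ Submodule.span K (v '' (s ∩ Set.Iio j))) :
    Submodule.span K (v '' Set.Iio i) = Submodule.span K (v '' (s ∩ Set.Iio i)) := by
  refine le_antisymm (Submodule.span_le.2 ?_)
    (Submodule.span_mono (Set.image_mono Set.inter_subset_right))
  rintro _ ⟨j, hj, rfl⟩
  by_cases hjs : j ∈ s
  · exact Submodule.subset_span ⟨j, ⟨hjs, hj⟩, rfl⟩
  · exact Submodule.span_mono
      (Set.image_mono (Set.inter_subset_inter_right s (Set.Iio_subset_Iio hj.le))) (h j hj hjs)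

variable [WellFoundedLT ι]

theorem mem_span_image_pivotSet_inter_Iio {v : ι → V} {i : ι} (hi : i ∉ pivotSet K v) :
    v i ∈ Submodule.span K (v '' (pivotSet K v ∩ Set.Iio i)) := by
  induction i using WellFoundedLT.induction with
  | ind i ih =>
    rw [← span_image_Iio_eq_span_image_inter ih]
    exact not_not.1 hi

theorem pivotSet_eq_iff {v : ι → V} {s : Set ι} :
    pivotSet K v = s ↔
      LinearIndepOn K v s ∧ ∀ i ∉ s, v i ∈ Submodule.span K (v '' (s ∩ Set.Iio i)) := by
  constructor
  · rintro rfl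
    exact ⟨linearIndepOn_pivotSet v, fun _ ↦ mem_span_image_pivotSet_inter_Iio⟩
  · rintro ⟨hli, hspan⟩
    have hIio (i : ι) := span_image_Iio_eq_span_image_inter (i := i) fun j _ ↦ hspan j
    ext i
    refine ⟨fun hi ↦ by_contra fun his ↦ hi (hIio i ▸ hspan i his), fun his hmem ↦ ?_⟩
    rw [hIio] at hmem
    refine hli.notMem_span his (Submodule.span_mono (Set.image_mono ?_) hmem)
    exact fun j hj ↦ ⟨hj.1, hj.2.ne⟩

theorem pivotSet_eq_iff_restrict {v : ι → V} {s : Set ι} :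
    pivotSet K v = s ↔ LinearIndependent K (fun j : s ↦ v j) ∧
      ∀ i : {i // i ∉ s},
        v i ∈ Submodule.span K ((fun j : s ↦ v j) '' (Subtype.val ⁻¹' Set.Iio i.1)) := by
  simp only [pivotSet_eq_iff, LinearIndepOn, Subtype.forall, Set.image_comp v Subtype.val,
    ← Function.comp_def v Subtype.val, Subtype.image_preimage_coe]

variable (K V) in
/-- A family with pivot set `s` is given by its linearly independent restriction to `s` and, for
each `i ∉ s`, a vector in the span of the members of that restriction preceding `i`. -/
def pivotSetEquiv (s : Set ι) [DecidablePred (· ∈ s)] :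
    {v : ι → V // pivotSet K v = s} ≃
      Σ w : {w : s → V // LinearIndependent K w}, {u : {i // i ∉ s} → V //
        ∀ i, u i ∈ Submodule.span K (w.1 '' (Subtype.val ⁻¹' Set.Iio i.1))} :=
  calc
    _ ≃ {p : (s → V) × ({i // i ∉ s} → V) // LinearIndependent K p.1 ∧
          ∀ i, p.2 i ∈ Submodule.span K (p.1 '' (Subtype.val ⁻¹' Set.Iio i.1))} :=
      (Equiv.piEquivPiSubtypeProd (· ∈ s) fun _ ↦ V).subtypeEquiv
        fun _ ↦ by simp only [pivotSet_eq_iff_restrict, Equiv.piEquivPiSubtypeProd_apply]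
    _ ≃ _ :=
      { toFun p := ⟨⟨p.1.1, p.2.1⟩, ⟨p.1.2, p.2.2⟩⟩
        invFun p := ⟨(p.1.1, p.2.1), p.1.2, p.2.2⟩ }

end PivotSet

section Inversions

open Finset

variable {ι : Type*} [LinearOrder ι] [Fintype ι] (s : Finset ι)

/-- The inversion number of a finite set `s` in a finite linear order: the number of pairs `i < j`
with `j ∈ s` and `i ∉ s`. For `ι = Fin N` this is `invNumFin`. -/
def inversionNumber : ℕ :=
  #{p ∈ sᶜ ×ˢ s | p.1 < p.2}

theorem inversionNumber_le : inversionNumber s ≤ #s * #sᶜ := by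
  rw [mul_comm, ← card_product]
  exact card_filter_le _ _

theorem sum_card_filter_lt_eq : ∑ i ∈ sᶜ, #{j ∈ s | j < i} = #s * #sᶜ - inversionNumber s := by
  have hsplit := card_filter_add_card_filter_not (s := sᶜ ×ˢ s) fun p ↦ p.1 < p.2
  have hnot : #{p ∈ sᶜ ×ˢ s | ¬ p.1 < p.2} = ∑ i ∈ sᶜ, #{j ∈ s | j < i} := by
    simp only [card_filter, sum_product]
    refine sum_congr rfl fun i hi ↦ sum_congr rfl fun j hj ↦ ?_
    have hij : j ≠ i := ne_of_mem_of_not_mem hj (mem_compl.1 hi)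
    simp only [not_lt, hij.le_iff_lt]
  rw [card_product] at hsplit
  rw [← hnot, mul_comm, ← hsplit, inversionNumber, Nat.add_sub_cancel_left]

theorem invNumFin_eq_inversionNumber {N : ℕ} (τ : Finset (Fin N)) :
    invNumFin τ = inversionNumber τ := by
  unfold invNumFin inversionNumber
  congr 1
  ext p
  simp only [mem_filter, mem_univ, true_and, mem_product, mem_compl]
  tauto

end Inversions

section Counting

open Finset Module

variable {K V ι : Type*} [DivisionRing K] [Finite K] [AddCommGroup V] [Module K V]

theorem natCard_span_image {w : ι → V} (hw : LinearIndependent K w) (t : Set ι) [Finite t] :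
    Nat.card (Submodule.span K (w '' t)) = Nat.card K ^ t.ncard := by
  have := Fintype.ofFinite t
  have := FiniteDimensional.span_of_finite K (t.toFinite.image w)
  have hfinrank : finrank K (Submodule.span K (w '' t)) = t.ncard := by
    have hwt : LinearIndependent K fun j : t ↦ w j := hw.comp _ Subtype.val_injective
    rw [Set.image_eq_range, finrank_span_eq_card hwt, ← Nat.card_eq_fintype_card,
      Nat.card_coe_set_eq]
  rw [natCard_eq_pow_finrank (K := K), hfinrank]

variable (K V) [Finite V] [LinearOrder ι] [Fintype ι]

theorem natCard_pivotSet_eq (s : Finset ι) :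
    Nat.card {v : ι → V // pivotSet K v = s} =
      Nat.card {w : s → V // LinearIndependent K w} *
        Nat.card K ^ ∑ i ∈ sᶜ, #{j ∈ s | j < i} := by
  have hncard (i : ι) :
      ((↑) ⁻¹' Set.Iio i : Set ↥(s : Set ι)).ncard = #{j ∈ s | j < i} := by
    rw [← Set.ncard_image_of_injective _ Subtype.val_injective, Subtype.image_preimage_coe,
      ← Set.ncard_coe_finset, coe_filter]
    rfl
  have hfiber (w : {w : ↥(s : Set ι) → V // LinearIndependent K w}) :
      Nat.card {u : {i // i ∉ (s : Set ι)} → V //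
        ∀ i, u i ∈ Submodule.span K (w.1 '' (Subtype.val ⁻¹' Set.Iio i.1))} =
        Nat.card K ^ ∑ i ∈ sᶜ, #{j ∈ s | j < i} := by
    rw [Nat.card_congr Equiv.subtypePiEquivPi, Nat.card_pi, sum_subtype sᶜ fun _ ↦ mem_compl,
      ← prod_pow_eq_pow_sum]
    exact prod_congr rfl fun i _ ↦ (natCard_span_image w.2 _).trans (by rw [hncard])
  have := Fintype.ofFinite {w : ↥(s : Set ι) → V // LinearIndependent K w}
  rw [Nat.card_congr (pivotSetEquiv K V (s : Set ι)), Nat.card_sigma,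
    sum_congr rfl fun w _ ↦ hfiber w, sum_const, smul_eq_mul, card_univ, ← Nat.card_eq_fintype_card]
  rfl

theorem stmt2_general (s : Finset ι) :
    inversionNumber s ≤ #s * #sᶜ ∧
    Nat.card {v : ι → V // pivotSet K v = s} =
      Nat.card {w : s → V // LinearIndependent K w} *
        Nat.card K ^ (#s * #sᶜ - inversionNumber s) ∧
    (Nat.card {v : ι → V // pivotSet K v = s} : ℝ) / Nat.card V ^ Fintype.card ι =
      (Nat.card {w : s → V // LinearIndependent K w} : ℝ) / Nat.card V ^ #s *
        ((Nat.card K : ℝ) ^ #s / Nat.card V) ^ #sᶜ *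
        ((Nat.card K : ℝ) ^ inversionNumber s)⁻¹ := by
  have hcard := natCard_pivotSet_eq K V s
  rw [sum_card_filter_lt_eq] at hcard
  refine ⟨inversionNumber_le s, hcard, ?_⟩
  have hK : (Nat.card K : ℝ) ≠ 0 := Nat.cast_ne_zero.2 Nat.card_pos.ne'
  rw [hcard, Nat.cast_mul, Nat.cast_pow, pow_sub₀ _ hK (inversionNumber_le s),
    ← card_add_card_compl s]
  ring

end Counting

theorem natCard_pivotSetFin_eq {F : Type*} [Field F] {b N : ℕ} (s : Set (Fin N)) :
    Nat.card {M : Matrix (Fin b) (Fin N) F // pivotSetFin M = s} =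
      Nat.card {v : Fin N → Fin b → F // pivotSet F v = s} :=
  Nat.card_congr ((Matrix.transposeAddEquiv _ _ F).toEquiv.subtypeEquiv fun _ ↦ Iff.rfl)

theorem natCard_linearIndependent_eq_natCard_GL {F κ : Type*} [Field F] [Finite F] [Finite κ]
    {b : ℕ} (hκ : Nat.card κ = b) :
    Nat.card {w : κ → Fin b → F // LinearIndependent F w} = Nat.card (GL (Fin b) F) := by
  have := Fintype.ofFinite F
  let e : κ ≃ Fin b := Finite.equivFinOfCardEq hκ
  rw [Nat.card_congr (Matrix.equiv_GL_linearindependent b)]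
  exact Nat.card_congr ((e.arrowCongr (.refl _)).subtypeEquiv fun _ ↦
    (linearIndependent_equiv e.symm).symm)

theorem stmt2 {F : Type*} [Field F] [Fintype F] {q b N : ℕ} (hq : Fintype.card F = q)
    (hbN : b ≤ N) (τ : Finset (Fin N)) (hτ : τ.card = b) :
    invNumFin τ ≤ b * (N - b) ∧
    Nat.card {M : Matrix (Fin b) (Fin N) F // pivotSetFin M = ↑τ} =
      Nat.card (GL (Fin b) F) * q ^ (b * (N - b) - invNumFin τ) ∧
    (Nat.card {M : Matrix (Fin b) (Fin N) F // pivotSetFin M = ↑τ} : ℝ) / q ^ (b * N) =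
      (Nat.card (GL (Fin b) F) : ℝ) / q ^ (b ^ 2) * ((q : ℝ) ^ invNumFin τ)⁻¹ := by
  subst hq hτ
  have hpow (k : ℕ) : (Fintype.card F : ℝ) ^ k ≠ 0 := by positivity
  rw [natCard_pivotSetFin_eq, invNumFin_eq_inversionNumber]
  simpa [Finset.card_compl, natCard_linearIndependent_eq_natCard_GL, hpow, ← pow_mul, sq] using
    stmt2_general F (Fin τ.card → F) τ
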